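/- Let A = (Q, X, q₀, T, F) be an updateable timed automaton and consider the Kleene iteration {G^i(q)} of the state-based guard equations with the red/green colouring. For every i > 0: if G^i(q) is green for all q ∈ Q, then G^{i+1}(q) is green for all q ∈ Q. -/

import Mathlib

open scoped NNReal

/-! ## Atomic constraints over a set of clocks -/

/-- Comparison operator `◁ ∈ {<, ≤}`. -/
inductive Ineq : Type where
  | lt : Ineq
  | le : Ineq
deriving DecidableEq

/-- Interpretation of a comparison operator on reals. -/
def Ineq.holds : Ineq → ℝ → ℝ → Prop
  | .lt, a, b => a < b
  | .le, a, b => a ≤ b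

/-- Atomic constraints over clocks `X`:
`upper x o c` is `x ◁ c` (c ∈ ℕ), `lower c o x` is `c ◁ x` (c ∈ ℕ),
`diag x y o d` is `x - y ◁ d` (d ∈ ℤ). -/
inductive Constr (X : Type) : Type where
  | upper : X → Ineq → ℕ → Constr X
  | lower : ℕ → Ineq → X → Constr X
  | diag : X → X → Ineq → ℤ → Constr X
deriving DecidableEq

namespace Constr

/-- Is the constraint a diagonal constraint `x - y ◁ d`? -/
def isDiag {X : Type} : Constr X → Bool
  | .diag _ _ _ _ => true
  | _ => false

/-- The integer constant of a constraint. -/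
def constOf {X : Type} : Constr X → ℤ
  | .upper _ _ c => (c : ℤ)
  | .lower c _ _ => (c : ℤ)
  | .diag _ _ _ d => d

/-- Satisfaction of a constraint by a clock valuation `v : X → ℝ≥0`. -/
def sat {X : Type} (v : X → ℝ≥0) : Constr X → Prop
  | .upper x o c => o.holds (v x : ℝ) (c : ℝ)
  | .lower c o x => o.holds (c : ℝ) (v x : ℝ)
  | .diag x y o d => o.holds ((v x : ℝ) - (v y : ℝ)) (d : ℝ)

end Constr

/-- Time elapse: `v + δ`. -/
def shift {X : Type} (v : X → ℝ≥0) (δ : ℝ≥0) : X → ℝ≥0 := fun x => v x + δ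

/-- The relation `v ⊑_G v'`: for all `φ ∈ G` and all delays `δ ≥ 0`,
`v + δ ⊨ φ` implies `v' + δ ⊨ φ`. -/
def simG {X : Type} (G : Set (Constr X)) (v v' : X → ℝ≥0) : Prop :=
  ∀ φ ∈ G, ∀ δ : ℝ≥0, Constr.sat (shift v δ) φ → Constr.sat (shift v' δ) φ

/-- `Z ⊑_G Z'` on sets of valuations. -/
def simGZ {X : Type} (G : Set (Constr X)) (Z Z' : Set (X → ℝ≥0)) : Prop :=
  ∀ v ∈ Z, ∃ v' ∈ Z', simG G v v'

open Classical in
/-- `[R]v`: reset the clocks in `R` to `0`. -/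
noncomputable def reset {X : Type} (R : Set X) (v : X → ℝ≥0) : X → ℝ≥0 :=
  fun x => if x ∈ R then 0 else v x

/-- Weakest precondition `wp(⊑_φ, R)` of a single constraint over a reset. -/
def wpReset {X : Type} (R : Set X) : Constr X → Set (Constr X)
  | .upper x o c => {ψ | x ∉ R ∧ ψ = .upper x o c}
  | .lower c o x => {ψ | x ∉ R ∧ ψ = .lower c o x}
  | .diag x y o d =>
      {ψ | (x ∉ R ∧ y ∉ R ∧ ψ = .diag x y o d) ∨
           (x ∉ R ∧ y ∈ R ∧ 0 ≤ d ∧ ψ = .upper x o d.toNat) ∨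
           (x ∈ R ∧ y ∉ R ∧ 0 ≤ -d ∧ ψ = .lower (-d).toNat o y)}

/-- Weakest precondition `wp(⊑_G, R)` of a set of constraints over a reset. -/
def wpResetSet {X : Type} (R : Set X) (G : Set (Constr X)) : Set (Constr X) :=
  ⋃ φ ∈ G, wpReset R φ

/-! ## Timed automata -/

/-- A transition: source state, guard (finite conjunction of constraints),
reset set, target state. -/
abbrev TTrans (Q X : Type) : Type := Q × Finset (Constr X) × Set X × Q

def TTrans.src {Q X : Type} (t : TTrans Q X) : Q := t.1
def TTrans.grd {Q X : Type} (t : TTrans Q X) : Finset (Constr X) := t.2.1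
def TTrans.rst {Q X : Type} (t : TTrans Q X) : Set X := t.2.2.1
def TTrans.tgt {Q X : Type} (t : TTrans Q X) : Q := t.2.2.2

/-- A timed automaton. -/
structure TA (Q X : Type) : Type where
  init : Q
  trans : Finset (TTrans Q X)
  acc : Set Q

/-- Action step of a timed automaton along transition `t`. -/
def Step {Q X : Type} (A : TA Q X) (t : TTrans Q X) (c c' : Q × (X → ℝ≥0)) : Prop :=
  t ∈ A.trans ∧ TTrans.src t = c.1 ∧ (∀ φ ∈ TTrans.grd t, Constr.sat c.2 φ) ∧
    c'.1 = TTrans.tgt t ∧ c'.2 = reset (TTrans.rst t) c.2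

/-- `r` is a simulation on the configurations of `A`: a reflexive transitive
relation, relating only configurations with equal states, compatible with
delays and action transitions. -/
def IsSimulation {Q X : Type} (A : TA Q X)
    (r : (Q × (X → ℝ≥0)) → (Q × (X → ℝ≥0)) → Prop) : Prop :=
  Reflexive r ∧ Transitive r ∧
  ∀ q v q' v', r (q, v) (q', v') →
    q = q' ∧
    (∀ δ : ℝ≥0, ∃ δ' : ℝ≥0, r (q, shift v δ) (q, shift v' δ')) ∧
    (∀ t c₁, Step A t (q, v) c₁ →
      ∃ v₁', Step A t (q, v') (c₁.1, v₁') ∧ r c₁ (c₁.1, v₁'))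

/-- The state-based guard equations:
`G(q) = ⋃_{(q,g,R,q₁) ∈ T} ({g} ∪ wp(⊑_{G(q₁)}, R))`. -/
def GuardEq {Q X : Type} (A : TA Q X) (G : Q → Set (Constr X)) : Prop :=
  ∀ q, G q = ⋃ t ∈ A.trans, ⋃ (_ : TTrans.src t = q),
    ((TTrans.grd t : Set (Constr X)) ∪ wpResetSet (TTrans.rst t) (G (TTrans.tgt t)))

/-! ## LU bounds -/

def lowerConstAt {X : Type} [DecidableEq X] (x : X) : Constr X → WithBot ℕ
  | .lower c _ y => if y = x then (c : WithBot ℕ) else ⊥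
  | _ => ⊥

def upperConstAt {X : Type} [DecidableEq X] (x : X) : Constr X → WithBot ℕ
  | .upper y _ c => if y = x then (c : WithBot ℕ) else ⊥
  | _ => ⊥

/-- `L_G(x)`: maximum constant among lower-bound constraints `c ◁ x` in `G`
(`⊥ = -∞` if none). -/
def Lbound {X : Type} [DecidableEq X] (G : Finset (Constr X)) (x : X) : WithBot ℕ :=
  G.sup (lowerConstAt x)

/-- `U_G(x)`: maximum constant among upper-bound constraints `x ◁ c` in `G`
(`⊥ = -∞` if none). -/
def Ubound {X : Type} [DecidableEq X] (G : Finset (Constr X)) (x : X) : WithBot ℕ :=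
  G.sup (upperConstAt x)

/-- The LU simulation `v ≼_LU v'` for bounds functions `L U : X → ℕ ∪ {-∞}`. -/
def luSim {X : Type} (L U : X → WithBot ℕ) (v v' : X → ℝ≥0) : Prop :=
  ∀ x : X,
    (v' x < v x → (L x).map (fun c : ℕ => (c : ℝ)) < ((v' x : ℝ) : WithBot ℝ)) ∧
    (v x < v' x → (U x).map (fun c : ℕ => (c : ℝ)) < ((v x : ℝ) : WithBot ℝ))

/-- The relation `v ⊑^LU_G v'`: `v ≼_{LU(G)} v'` and every diagonal constraint
of `G` satisfied by `v` is satisfied by `v'`. -/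
def luglu {X : Type} [DecidableEq X] (G : Finset (Constr X)) (v v' : X → ℝ≥0) : Prop :=
  luSim (Lbound G) (Ubound G) v v' ∧
    ∀ φ ∈ G, φ.isDiag → Constr.sat v φ → Constr.sat v' φ

/-- Lifting a relation on valuations to sets of valuations. -/
def zoneRel {X : Type} (r : (X → ℝ≥0) → (X → ℝ≥0) → Prop) (Z Z' : Set (X → ℝ≥0)) : Prop :=
  ∀ v ∈ Z, ∃ v' ∈ Z', r v v'

/-! ## Runs of timed automata -/

/-- `stepsFrom A c l`: the alternating delay-action sequence `l` is a valid
sequence of steps of `A` starting at configuration `c`. -/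
def stepsFrom {Q X : Type} (A : TA Q X) :
    (Q × (X → ℝ≥0)) → List (ℝ≥0 × TTrans Q X) → Prop
  | _, [] => True
  | c, (δ, t) :: l =>
      t ∈ A.trans ∧ TTrans.src t = c.1 ∧
      (∀ φ ∈ TTrans.grd t, Constr.sat (shift c.2 δ) φ) ∧
      stepsFrom A (TTrans.tgt t, reset (TTrans.rst t) (shift c.2 δ)) l

/-- Configuration reached after a sequence of delay-action steps. -/
noncomputable def endConfig {Q X : Type} :
    (Q × (X → ℝ≥0)) → List (ℝ≥0 × TTrans Q X) → (Q × (X → ℝ≥0))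
  | c, [] => c
  | c, (δ, t) :: l => endConfig (TTrans.tgt t, reset (TTrans.rst t) (shift c.2 δ)) l

/-- A run of `A`: a valid sequence of delay-action steps from `(q₀, 0̄)`. -/
def TA.Run {Q X : Type} (A : TA Q X) : Type :=
  {l : List (ℝ≥0 × TTrans Q X) // stepsFrom A (A.init, fun _ => 0) l}

/-- A run is accepting if it ends in an accepting state. -/
def TA.Accepting {Q X : Type} (A : TA Q X) (r : A.Run) : Prop :=
  (endConfig (A.init, fun _ => 0) r.val).1 ∈ A.acc

/-- `A` is diagonal-free: no guard contains a diagonal constraint. -/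
def DiagFree {Q X : Type} (A : TA Q X) : Prop :=
  ∀ t ∈ A.trans, ∀ φ ∈ TTrans.grd t, ¬ φ.isDiag

/-- The (finite) set of diagonal constraints occurring in guards of `A`. -/
def diagGuards {Q X : Type} [DecidableEq X] (A : TA Q X) : Finset (Constr X) :=
  A.trans.biUnion fun t => (TTrans.grd t).filter fun φ => φ.isDiag

/-! ## Updateable timed automata -/

/-- Atomic update of a clock: `x := c` or `x := y + d`. -/
inductive AtomicUp (X : Type) : Type where
  | const : ℕ → AtomicUp X
  | add : X → ℤ → AtomicUp X
deriving DecidableEq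

/-- `up(v) : X → ℝ` (may be negative). -/
def applyUpd {X : Type} (up : X → AtomicUp X) (v : X → ℝ≥0) : X → ℝ :=
  fun x => match up x with
    | .const c => (c : ℝ)
    | .add y d => (v y : ℝ) + (d : ℝ)

/-- Weakest precondition `wp(⊑_φ, up)` of a single constraint over an update. -/
def wpUpd {X : Type} [DecidableEq X] (up : X → AtomicUp X) : Constr X → Set (Constr X)
  | .upper x o c =>
      match up x with
      | .const _ => ∅
      | .add y d => if 0 ≤ (c : ℤ) - d then {Constr.upper y o ((c : ℤ) - d).toNat} else ∅
  | .lower c o x =>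
      match up x with
      | .const _ => ∅
      | .add y d => if 0 ≤ (c : ℤ) - d then {Constr.lower ((c : ℤ) - d).toNat o y} else ∅
  | .diag x y o c =>
      match up x, up y with
      | .const _, .const _ => ∅
      | .add y₁ d₁, .const c₂ =>
          if 0 ≤ c + (c₂ : ℤ) - d₁ then {Constr.upper y₁ o (c + (c₂ : ℤ) - d₁).toNat} else ∅
      | .const c₁, .add y₂ d₂ =>
          if 0 ≤ (c₁ : ℤ) - d₂ - c then {Constr.lower ((c₁ : ℤ) - d₂ - c).toNat o y₂} else ∅
      | .add y₁ d₁, .add y₂ d₂ =>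
          if y₁ = y₂ then ∅ else {Constr.diag y₁ y₂ o (c - d₁ + d₂)}

/-- Weakest precondition `wp(⊑_G, up)` of a set of constraints over an update. -/
def wpUpdSet {X : Type} [DecidableEq X] (up : X → AtomicUp X) (G : Set (Constr X)) :
    Set (Constr X) :=
  ⋃ φ ∈ G, wpUpd up φ

/-- The set of constraints `{0 ≤ x | x ∈ X}`. -/
def nonnegConstrs (X : Type) : Set (Constr X) := {φ | ∃ x : X, φ = Constr.lower 0 Ineq.le x}

/-- A transition of an updateable timed automaton: source, guard, update, target. -/
abbrev UTrans (Q X : Type) : Type := Q × Finset (Constr X) × (X → AtomicUp X) × Q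

def UTrans.src {Q X : Type} (t : UTrans Q X) : Q := t.1
def UTrans.grd {Q X : Type} (t : UTrans Q X) : Finset (Constr X) := t.2.1
def UTrans.upd {Q X : Type} (t : UTrans Q X) : X → AtomicUp X := t.2.2.1
def UTrans.tgt {Q X : Type} (t : UTrans Q X) : Q := t.2.2.2

/-- An updateable timed automaton. -/
structure UTA (Q X : Type) : Type where
  init : Q
  trans : Finset (UTrans Q X)
  acc : Set Q

/-- Action step of an updateable timed automaton along transition `t`:
the guard holds, `up(v) ≥ 0`, and the new valuation is `up(v)`. -/
def UStep {Q X : Type} (A : UTA Q X) (t : UTrans Q X) (c c' : Q × (X → ℝ≥0)) : Prop :=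
  t ∈ A.trans ∧ UTrans.src t = c.1 ∧ (∀ φ ∈ UTrans.grd t, Constr.sat c.2 φ) ∧
    c'.1 = UTrans.tgt t ∧ ∀ x, (c'.2 x : ℝ) = applyUpd (UTrans.upd t) c.2 x

/-- `r` is a simulation on configurations of an updateable timed automaton. -/
def IsSimulationU {Q X : Type} (A : UTA Q X)
    (r : (Q × (X → ℝ≥0)) → (Q × (X → ℝ≥0)) → Prop) : Prop :=
  Reflexive r ∧ Transitive r ∧
  ∀ q v q' v', r (q, v) (q', v') →
    q = q' ∧
    (∀ δ : ℝ≥0, ∃ δ' : ℝ≥0, r (q, shift v δ) (q, shift v' δ')) ∧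
    (∀ t c₁, UStep A t (q, v) c₁ →
      ∃ v₁', UStep A t (q, v') (c₁.1, v₁') ∧ r c₁ (c₁.1, v₁'))

/-- State-based guard equations for updateable timed automata. -/
def GuardEqU {Q X : Type} [DecidableEq X] (A : UTA Q X) (G : Q → Set (Constr X)) : Prop :=
  ∀ q, G q = ⋃ t ∈ A.trans, ⋃ (_ : UTrans.src t = q),
    ((UTrans.grd t : Set (Constr X)) ∪ wpUpdSet (UTrans.upd t) (nonnegConstrs X)
      ∪ wpUpdSet (UTrans.upd t) (G (UTrans.tgt t)))

/-- Kleene iterates `G^i(q)` of the state-based guard equations. -/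
def iterG {Q X : Type} [DecidableEq X] (A : UTA Q X) : ℕ → Q → Set (Constr X)
  | 0 => fun q => ⋃ t ∈ A.trans, ⋃ (_ : UTrans.src t = q),
      ((UTrans.grd t : Set (Constr X)) ∪ wpUpdSet (UTrans.upd t) (nonnegConstrs X))
  | (i + 1) => fun q => iterG A i q ∪
      (⋃ t ∈ A.trans, ⋃ (_ : UTrans.src t = q),
        wpUpdSet (UTrans.upd t) (iterG A i (UTrans.tgt t)))

/-- `G^{i+1}(q)` is coloured red: a new diagonal constraint was added, or a new
non-diagonal constraint whose constant is strictly bigger than the constant of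
every non-diagonal constraint of the same kind on the same clock in `G^i(q)`. -/
def RedAt {Q X : Type} [DecidableEq X] (A : UTA Q X) : ℕ → Q → Prop
  | 0, _ => False
  | (i + 1), q =>
      (∃ φ : Constr X, φ ∈ iterG A (i + 1) q ∧ φ ∉ iterG A i q ∧ φ.isDiag) ∨
      (∃ (x : X) (o : Ineq) (c : ℕ),
        Constr.upper x o c ∈ iterG A (i + 1) q ∧ Constr.upper x o c ∉ iterG A i q ∧
        ∀ (o' : Ineq) (c' : ℕ), Constr.upper x o' c' ∈ iterG A i q → c' < c) ∨
      (∃ (x : X) (o : Ineq) (c : ℕ),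
        Constr.lower c o x ∈ iterG A (i + 1) q ∧ Constr.lower c o x ∉ iterG A i q ∧
        ∀ (o' : Ineq) (c' : ℕ), Constr.lower c' o' x ∈ iterG A i q → c' < c)

/-- `G^i(q)` is coloured green. -/
def GreenAt {Q X : Type} [DecidableEq X] (A : UTA Q X) (i : ℕ) (q : Q) : Prop :=
  ¬ RedAt A i q

/-- Absolute value of the constant of an atomic update. -/
def updBound {X : Type} : AtomicUp X → ℕ
  | .const c => c
  | .add _ d => d.natAbs

/-! ## The statement -/

/-!
An update translates the constant of a non-diagonal constraint by an amount that depends only on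
its clock. Hence `wp` is monotone for the comparison of constants: if the smaller of two constants
stays nonnegative after translation, so does the larger one. A constraint that is new in
`G^{i+2}(q)` comes from some `ψ` that is new in the set `G^{i+1}(q')` of a successor `q'`; greenness
bounds `ψ` by some `χ ∈ G^i(q')`, and `wp` of `χ` already lies in `G^{i+1}(q)`.
-/

/-- `φ.IsDominatedBy ψ`: both constraints are non-diagonal, of the same kind and on the same clock,
and the constant of `φ` is at most that of `ψ`. As in the colouring, the operators `<` and `≤` are
not compared, and diagonal constraints are not related to anything, not even to themselves. -/
inductive Constr.IsDominatedBy {X : Type} : Constr X → Constr X → Prop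
  | upper {x : X} {o o' : Ineq} {c c' : ℕ} (h : c ≤ c') :
      IsDominatedBy (.upper x o c) (.upper x o' c')
  | lower {x : X} {o o' : Ineq} {c c' : ℕ} (h : c ≤ c') :
      IsDominatedBy (.lower c o x) (.lower c' o' x)

section

variable {Q X : Type} [DecidableEq X]

theorem mem_wpUpd_upper_iff {up : X → AtomicUp X} {x : X} {o : Ineq} {c : ℕ} {φ : Constr X} :
    φ ∈ wpUpd up (.upper x o c) ↔
      ∃ (y : X) (d : ℤ) (e : ℕ), up x = .add y d ∧ e + d = c ∧ φ = .upper y o e := by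
  cases hx : up x <;> grind [wpUpd]

theorem mem_wpUpd_lower_iff {up : X → AtomicUp X} {x : X} {o : Ineq} {c : ℕ} {φ : Constr X} :
    φ ∈ wpUpd up (.lower c o x) ↔
      ∃ (y : X) (d : ℤ) (e : ℕ), up x = .add y d ∧ e + d = c ∧ φ = .lower e o y := by
  cases hx : up x <;> grind [wpUpd]

theorem Constr.IsDominatedBy.exists_mem_wpUpd {up : X → AtomicUp X} {ψ χ φ : Constr X}
    (hψχ : ψ.IsDominatedBy χ) (hφ : φ ∈ wpUpd up ψ) :
    ∃ φ' ∈ wpUpd up χ, φ.IsDominatedBy φ' := by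
  cases hψχ with
  | @upper x o o' c c' hcc' =>
    obtain ⟨y, d, e, hx, hec, rfl⟩ := mem_wpUpd_upper_iff.mp hφ
    obtain ⟨e', he'⟩ := Int.eq_ofNat_of_zero_le (a := c' - d) (by omega)
    exact ⟨.upper y o' e', mem_wpUpd_upper_iff.mpr ⟨y, d, e', hx, by omega, rfl⟩,
      .upper (by omega)⟩
  | @lower x o o' c c' hcc' =>
    obtain ⟨y, d, e, hx, hec, rfl⟩ := mem_wpUpd_lower_iff.mp hφ
    obtain ⟨e', he'⟩ := Int.eq_ofNat_of_zero_le (a := c' - d) (by omega)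
    exact ⟨.lower e' o' y, mem_wpUpd_lower_iff.mpr ⟨y, d, e', hx, by omega, rfl⟩,
      .lower (by omega)⟩

variable {A : UTA Q X} {i : ℕ} {q : Q}

theorem mem_iterG_succ_iff {φ : Constr X} :
    φ ∈ iterG A (i + 1) q ↔ φ ∈ iterG A i q ∨
      ∃ t ∈ A.trans, UTrans.src t = q ∧ ∃ ψ ∈ iterG A i (UTrans.tgt t),
        φ ∈ wpUpd (UTrans.upd t) ψ := by
  simp only [iterG, wpUpdSet, Set.mem_union, Set.mem_iUnion, exists_prop]

theorem greenAt_succ_iff :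
    GreenAt A (i + 1) q ↔
      ∀ φ ∈ iterG A (i + 1) q \ iterG A i q, ∃ ψ ∈ iterG A i q, φ.IsDominatedBy ψ := by
  constructor
  · rintro hgreen φ ⟨hφ, hφ'⟩
    simp only [GreenAt, RedAt, not_or, not_exists, not_and, not_forall, not_lt] at hgreen
    obtain ⟨hdiag, hupper, hlower⟩ := hgreen
    cases φ with
    | upper x o c =>
      obtain ⟨o', c', hψ, hcc'⟩ := hupper x o c hφ hφ'
      exact ⟨.upper x o' c', hψ, .upper hcc'⟩
    | lower c o x =>
      obtain ⟨o', c', hψ, hcc'⟩ := hlower x o c hφ hφ'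
      exact ⟨.lower c' o' x, hψ, .lower hcc'⟩
    | diag x y o d => exact absurd rfl (hdiag _ hφ hφ')
  · rintro hdom (⟨φ, hφ, hφ', hdiag⟩ | ⟨x, o, c, hφ, hφ', hlt⟩ | ⟨x, o, c, hφ, hφ', hlt⟩)
    · obtain ⟨ψ, -, ⟨⟩⟩ := hdom φ ⟨hφ, hφ'⟩ <;> cases hdiag
    · obtain ⟨_, hψ, ⟨hcc'⟩⟩ := hdom _ ⟨hφ, hφ'⟩
      exact (hlt _ _ hψ).not_ge hcc'
    · obtain ⟨_, hψ, _ | hcc'⟩ := hdom _ ⟨hφ, hφ'⟩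
      exact (hlt _ _ hψ).not_ge hcc'

theorem exists_mem_wpUpd_of_mem_iterG_diff {φ : Constr X}
    (hφ : φ ∈ iterG A (i + 2) q \ iterG A (i + 1) q) :
    ∃ t ∈ A.trans, UTrans.src t = q ∧
      ∃ ψ ∈ iterG A (i + 1) (UTrans.tgt t) \ iterG A i (UTrans.tgt t),
        φ ∈ wpUpd (UTrans.upd t) ψ := by
  obtain ⟨hφ, hφ'⟩ := hφ
  obtain ⟨t, ht, hq, ψ, hψ, hφψ⟩ := (mem_iterG_succ_iff.mp hφ).resolve_left hφ'
  have hψ' : ψ ∉ iterG A i (UTrans.tgt t) := fun hmem =>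
    hφ' (mem_iterG_succ_iff.mpr (.inr ⟨t, ht, hq, ψ, hmem, hφψ⟩))
  exact ⟨t, ht, hq, ψ, ⟨hψ, hψ'⟩, hφψ⟩

theorem greenAt_succ_succ_of_forall_tgt
    (h : ∀ t ∈ A.trans, UTrans.src t = q → GreenAt A (i + 1) (UTrans.tgt t)) :
    GreenAt A (i + 2) q := by
  refine greenAt_succ_iff.mpr fun φ hφ => ?_
  obtain ⟨t, ht, hq, ψ, hψ, hφψ⟩ := exists_mem_wpUpd_of_mem_iterG_diff hφ
  obtain ⟨χ, hχ, hψχ⟩ := greenAt_succ_iff.mp (h t ht hq) ψ hψ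
  obtain ⟨φ', hφ', hφφ'⟩ := hψχ.exists_mem_wpUpd hφψ
  exact ⟨φ', mem_iterG_succ_iff.mpr (.inr ⟨t, ht, hq, χ, hχ, hφ'⟩), hφφ'⟩

end

theorem stmt14_general {Q X : Type} [DecidableEq X] (A : UTA Q X) (i : ℕ) (hi : 0 < i)
    (h : ∀ q, GreenAt A i q) (q : Q) : GreenAt A (i + 1) q := by
  obtain ⟨j, rfl⟩ := Nat.exists_eq_add_one.mpr hi
  exact greenAt_succ_succ_of_forall_tgt fun t _ _ => h (UTrans.tgt t)

theorem stmt14 {Q X : Type} [Fintype Q] [Fintype X] [DecidableEq X] (A : UTA Q X)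
    (i : ℕ) (hi : 0 < i) (h : ∀ q, GreenAt A i q) : ∀ q, GreenAt A (i + 1) q :=
  stmt14_general A i hi h
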